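/- arXiv:2411.09061 — 5 statements merged into one kernel-verified Lean document; each statement's English description precedes it below -/
import Mathlib

section
/- The discrete group ℤ is asymptotically spherical: for any two maximal length functions ℓ₁ and ℓ₂ on ℤ, there exists λ > 0 such that for every ε > 0 there is M with |ℓ₁(n)/ℓ₂(n) − λ| < ε for all integers n with |n| ≥ M. -/
/-- A length function on an additive group `G`. -/
def IsAddLengthFunction {G : Type*} [AddGroup G] (ℓ : G → ℝ) : Prop :=
  (∀ x : G, 0 ≤ ℓ x) ∧ (∀ x : G, ℓ x = 0 ↔ x = 0) ∧ (∀ x : G, ℓ (-x) = ℓ x) ∧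
    ∀ x y : G, ℓ (x + y) ≤ ℓ x + ℓ y

/-- On a discrete group every length function is compatible, so a length function is
maximal iff it dominates every length function up to affine bounds. -/
def IsMaximalAddLengthDiscrete {G : Type*} [AddGroup G] (ℓ : G → ℝ) : Prop :=
  IsAddLengthFunction ℓ ∧ ∀ ℓ' : G → ℝ, IsAddLengthFunction ℓ' →
    ∃ K C : ℝ, ∀ x : G, ℓ' x ≤ K * ℓ x + C

lemma tendsto_aux (ℓ : ℤ → ℝ) (h : IsMaximalAddLengthDiscrete ℓ) :
    ∃ c : ℝ, 0 < c ∧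
      Filter.Tendsto (fun n : ℕ => ℓ (n : ℤ) / (n : ℝ)) Filter.atTop (nhds c) := by
  obtain ⟨⟨h0, hz, hn, ha⟩, hmax⟩ := h
  have hs : Subadditive (fun n : ℕ => ℓ (n : ℤ)) := by
    intro m n
    push_cast
    exact ha _ _
  have hb : BddBelow (Set.range fun n : ℕ => ℓ (n : ℤ) / (n : ℝ)) := by
    refine ⟨0, ?_⟩
    rintro _ ⟨n, rfl⟩
    exact div_nonneg (h0 _) (Nat.cast_nonneg n)
  have ht := hs.tendsto_lim hb
  refine ⟨hs.lim, ?_, ht⟩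
  obtain ⟨K, C, hKC⟩ := hmax (fun n : ℤ => |(n : ℝ)|) ⟨fun x => abs_nonneg _, fun x => by simp,
    fun x => by simp, fun x y => by push_cast; exact abs_add_le _ _⟩
  have hc0 : 0 ≤ hs.lim := ge_of_tendsto' ht fun n => div_nonneg (h0 _) (Nat.cast_nonneg n)
  have hC : Filter.Tendsto (fun n : ℕ => C / (n : ℝ)) Filter.atTop (nhds 0) :=
    tendsto_const_div_atTop_nhds_zero_nat C
  have h2 := (ht.const_mul K).add hC
  have h1 : (1 : ℝ) ≤ K * hs.lim + 0 := by
    refine ge_of_tendsto h2 ?_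
    filter_upwards [Filter.eventually_gt_atTop 0] with n hn0
    have hp : (0 : ℝ) < n := by exact_mod_cast hn0
    have := hKC (n : ℤ)
    simp only [Int.cast_natCast, abs_of_pos hp] at this
    rw [← mul_div_assoc, ← add_div, le_div_iff₀ hp]
    linarith
  rcases hc0.eq_or_lt with h | h
  · rw [← h] at h1
    norm_num at h1
  · exact h

/-- The discrete group `ℤ` is asymptotically spherical: for any two maximal length
functions `ℓ₁, ℓ₂` on `ℤ` there is `λ > 0` such that `ℓ₁(n)/ℓ₂(n) → λ` as `|n| → ∞`. -/
theorem statement5 (ℓ₁ ℓ₂ : ℤ → ℝ)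
    (h₁ : IsMaximalAddLengthDiscrete ℓ₁) (h₂ : IsMaximalAddLengthDiscrete ℓ₂) :
    ∃ lam : ℝ, 0 < lam ∧ ∀ ε : ℝ, 0 < ε → ∃ M : ℝ,
      ∀ n : ℤ, M ≤ |(n : ℝ)| → |ℓ₁ n / ℓ₂ n - lam| < ε := by
  obtain ⟨a, ha, hta⟩ := tendsto_aux ℓ₁ h₁
  obtain ⟨b, hb, htb⟩ := tendsto_aux ℓ₂ h₂
  refine ⟨a / b, div_pos ha hb, fun ε hε => ?_⟩
  have ht := hta.div htb hb.ne'
  obtain ⟨N, hN⟩ := Metric.tendsto_atTop.1 ht ε hε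
  refine ⟨(N : ℝ) + 1, fun n hn => ?_⟩
  have habs : |(n : ℝ)| = (n.natAbs : ℝ) := by
    rw [Nat.cast_natAbs, Int.cast_abs]
  rw [habs] at hn
  have hge : N + 1 ≤ n.natAbs := by exact_mod_cast hn
  have key := hN n.natAbs (by omega)
  have hne : (n.natAbs : ℝ) ≠ 0 := by
    have : n.natAbs ≠ 0 := by omega
    exact_mod_cast this
  have e : ∀ ℓ : ℤ → ℝ, IsMaximalAddLengthDiscrete ℓ → ℓ (n.natAbs : ℤ) = ℓ n := by
    intro ℓ h
    rcases Int.natAbs_eq n with h' | h'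
    · rw [← h']
    · conv_rhs => rw [h']
      exact (h.1.2.2.1 _).symm
  simp only [Pi.div_apply] at key
  rw [div_div_div_cancel_right₀ hne, e ℓ₁ h₁, e ℓ₂ h₂, Real.dist_eq] at key
  exact key
end

section
/- The additive topological group ℝ (with its usual topology) is asymptotically spherical: for any two maximal length functions ℓ₁ and ℓ₂ on ℝ, there exists λ > 0 such that for every ε > 0 there is M with |ℓ₁(x)/ℓ₂(x) − λ| < ε for all real x with |x| ≥ M. -/
open Filter Topology

/-- A compatible length function on an additive topological group: the balls `B_ℓ(r)`,
`r > 0`, form a neighbourhood basis at the identity. -/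
def IsCompatibleAddLength {G : Type*} [AddGroup G] [TopologicalSpace G] (ℓ : G → ℝ) : Prop :=
  IsAddLengthFunction ℓ ∧ (∀ r : ℝ, 0 < r → {x : G | ℓ x < r} ∈ 𝓝 (0 : G)) ∧
    ∀ U ∈ 𝓝 (0 : G), ∃ r : ℝ, 0 < r ∧ {x : G | ℓ x < r} ⊆ U

/-- A maximal (compatible) length function on an additive topological group. -/
def IsMaximalAddLength {G : Type*} [AddGroup G] [TopologicalSpace G] (ℓ : G → ℝ) : Prop :=
  IsCompatibleAddLength ℓ ∧ ∀ ℓ' : G → ℝ, IsCompatibleAddLength ℓ' →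
    ∃ K C : ℝ, ∀ x : G, ℓ' x ≤ K * ℓ x + C

theorem abs_compatible_aux : IsCompatibleAddLength (fun x : ℝ => |x|) := by
  refine ⟨⟨fun x => abs_nonneg x, fun x => abs_eq_zero, fun x => abs_neg x,
    fun x y => abs_add_le x y⟩, ?_, ?_⟩
  · intro r hr
    filter_upwards [Metric.ball_mem_nhds (0 : ℝ) hr] with x hx
    simpa using hx
  · intro U hU
    obtain ⟨r, hr, h⟩ := Metric.mem_nhds_iff.1 hU
    refine ⟨r, hr, fun x hx => h ?_⟩
    simpa using hx

theorem maximal_tendsto_aux (ℓ : ℝ → ℝ) (h : IsMaximalAddLength ℓ) :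
    ∃ L : ℝ, 0 < L ∧ Tendsto (fun x => ℓ x / x) atTop (𝓝 L) := by
  obtain ⟨⟨⟨hnn, hz, hneg, hadd⟩, hball, -⟩, hmax⟩ := h
  obtain ⟨K, C, hKC⟩ := hmax _ abs_compatible_aux
  have hmul : ∀ (n : ℕ) (x : ℝ), ℓ (n * x) ≤ n * ℓ x := by
    intro n x
    induction n with
    | zero => simp [(hz 0).2 rfl]
    | succ k ih =>
      have := hadd (k * x) x
      push_cast
      rw [add_mul, add_mul, one_mul, one_mul]
      linarith
  -- boundedness on the unit interval
  obtain ⟨B, hB⟩ : ∃ B : ℝ, ∀ x, 0 ≤ x → x ≤ 1 → ℓ x ≤ B := by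
    obtain ⟨r, hr, hsub⟩ := Metric.mem_nhds_iff.1 (hball 1 one_pos)
    obtain ⟨n, hn⟩ := exists_nat_one_div_lt hr
    refine ⟨((n + 1 : ℕ) : ℝ), fun x hx0 hx1 => ?_⟩
    have hpos : (0 : ℝ) < ((n + 1 : ℕ) : ℝ) := by positivity
    have hm := hmul (n + 1) (x / ((n + 1 : ℕ) : ℝ))
    rw [mul_div_cancel₀ _ hpos.ne'] at hm
    have hlt : ℓ (x / ((n + 1 : ℕ) : ℝ)) < 1 := by
      apply hsub
      rw [Metric.mem_ball, dist_zero_right, Real.norm_eq_abs, abs_of_nonneg (by positivity)]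
      refine lt_of_le_of_lt ?_ hn
      push_cast
      gcongr
    nlinarith
  have hsubadd : Subadditive (fun n : ℕ => ℓ n) := by
    intro m n
    have := hadd m n
    simpa using this
  have hlim : Tendsto (fun n : ℕ => ℓ n / n) atTop (𝓝 hsubadd.lim) := by
    apply hsubadd.tendsto_lim
    refine ⟨0, ?_⟩
    rintro _ ⟨n, rfl⟩
    exact div_nonneg (hnn _) (Nat.cast_nonneg _)
  set L := hsubadd.lim with hL
  refine ⟨L, ?_, ?_⟩
  · have h0 : 0 ≤ L := ge_of_tendsto' hlim fun n => div_nonneg (hnn _) (Nat.cast_nonneg _)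
    have h1 : 1 ≤ K * L + 0 := by
      have ht : Tendsto (fun n : ℕ => K * (ℓ n / n) + C / n) atTop (𝓝 (K * L + 0)) :=
        (hlim.const_mul K).add (tendsto_const_div_atTop_nhds_zero_nat C)
      refine ge_of_tendsto ht ?_
      filter_upwards [eventually_gt_atTop 0] with n hn
      have hn' : (0 : ℝ) < n := by exact_mod_cast hn
      have := hKC n
      simp only [Nat.abs_cast] at this
      have e : K * (ℓ n / n) + C / n = (K * ℓ n + C) / n := by ring
      rw [e, le_div_iff₀ hn']
      linarith
    rcases h0.lt_or_eq with h | h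
    · exact h
    · rw [← h] at h1
      norm_num at h1
  · have hA : Tendsto (fun x : ℝ => (ℓ (⌊x⌋₊ : ℝ) / (⌊x⌋₊ : ℝ)) * ((⌊x⌋₊ : ℝ) / x)) atTop
        (𝓝 (L * 1)) :=
      (hlim.comp tendsto_nat_floor_atTop).mul tendsto_nat_floor_div_atTop
    have hD : Tendsto (fun x : ℝ => (ℓ x - ℓ (⌊x⌋₊ : ℝ)) / x) atTop (𝓝 0) := by
      have hBx : Tendsto (fun x : ℝ => B / x) atTop (𝓝 0) := tendsto_const_nhds.div_atTop tendsto_id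
      refine squeeze_zero_norm' ?_ hBx
      filter_upwards [eventually_gt_atTop 0] with x hx
      have h1 := Nat.floor_le hx.le
      have h2 := Nat.lt_floor_add_one x
      have h3 := hB (x - ⌊x⌋₊) (by linarith) (by linarith)
      have h4 := hadd (x - ⌊x⌋₊) ⌊x⌋₊
      have h5 := hadd x (-(x - ⌊x⌋₊))
      rw [hneg] at h5
      have e5 : x + -(x - (⌊x⌋₊ : ℝ)) = ⌊x⌋₊ := by ring
      rw [e5] at h5
      rw [sub_add_cancel] at h4
      rw [Real.norm_eq_abs, abs_div, abs_of_pos hx]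
      gcongr
      rw [abs_le]
      constructor <;> linarith
    have hS := hA.add hD
    rw [mul_one, add_zero] at hS
    refine hS.congr' ?_
    filter_upwards [eventually_ge_atTop 1] with x hx
    have hf : (⌊x⌋₊ : ℝ) ≠ 0 := by
      have : 0 < ⌊x⌋₊ := Nat.floor_pos.2 hx
      positivity
    have hx' : x ≠ 0 := by positivity
    field_simp
    ring

/-- The additive topological group `ℝ` (with its usual topology) is asymptotically
spherical: for any two maximal length functions `ℓ₁, ℓ₂` on `ℝ` there is `λ > 0` such
that `ℓ₁(x)/ℓ₂(x) → λ` as `|x| → ∞`. -/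
theorem statement6 (ℓ₁ ℓ₂ : ℝ → ℝ)
    (h₁ : IsMaximalAddLength ℓ₁) (h₂ : IsMaximalAddLength ℓ₂) :
    ∃ lam : ℝ, 0 < lam ∧ ∀ ε : ℝ, 0 < ε → ∃ M : ℝ,
      ∀ x : ℝ, M ≤ |x| → |ℓ₁ x / ℓ₂ x - lam| < ε := by
  obtain ⟨L₁, hL₁, t₁⟩ := maximal_tendsto_aux ℓ₁ h₁
  obtain ⟨L₂, hL₂, t₂⟩ := maximal_tendsto_aux ℓ₂ h₂
  refine ⟨L₁ / L₂, div_pos hL₁ hL₂, fun ε hε => ?_⟩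
  have ht : Tendsto (fun x => ℓ₁ x / ℓ₂ x) atTop (𝓝 (L₁ / L₂)) := by
    refine (t₁.div t₂ hL₂.ne').congr' ?_
    filter_upwards [eventually_gt_atTop 0] with x hx
    exact div_div_div_cancel_right₀ hx.ne' _ _
  obtain ⟨M, hM⟩ := eventually_atTop.1 (Metric.tendsto_nhds.1 ht ε hε)
  refine ⟨M, fun x hx => ?_⟩
  have hh := hM |x| hx
  rw [Real.dist_eq] at hh
  rcases abs_choice x with e | e
  · rwa [e] at hh
  · rwa [e, h₁.1.1.2.2.1, h₂.1.1.2.2.1] at hh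
end

section
/- The infinite dihedral group D∞ = C₂ ⋉ ℤ (the semidirect product in which the nontrivial element of the cyclic group C₂ of order 2 acts on ℤ by n ↦ −n), regarded as a discrete group, is asymptotically spherical: for any two maximal length functions ℓ₁ and ℓ₂ on D∞, there exists λ > 0 such that for every ε > 0 the set { g ∈ D∞ : |ℓ₁(g)/ℓ₂(g) − λ| ≥ ε } is finite. -/
open Multiplicative

/-- A length function on a group `G`. -/
def IsLengthFunction {G : Type*} [Group G] (ℓ : G → ℝ) : Prop :=
  (∀ x : G, 0 ≤ ℓ x) ∧ (∀ x : G, ℓ x = 0 ↔ x = 1) ∧ (∀ x : G, ℓ x⁻¹ = ℓ x) ∧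
    ∀ x y : G, ℓ (x * y) ≤ ℓ x + ℓ y

/-- On a discrete group every length function is compatible, so a length function is
maximal iff it dominates every length function up to affine bounds. -/
def IsMaximalLengthDiscrete {G : Type*} [Group G] (ℓ : G → ℝ) : Prop :=
  IsLengthFunction ℓ ∧ ∀ ℓ' : G → ℝ, IsLengthFunction ℓ' →
    ∃ K C : ℝ, ∀ x : G, ℓ' x ≤ K * ℓ x + C

/-- The automorphism `n ↦ -n` of `ℤ` (written multiplicatively). -/
def negAut : MulAut (Multiplicative ℤ) := MulEquiv.inv (Multiplicative ℤ)

theorem negAut_sq : negAut ^ 2 = 1 := by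
  ext x
  show (negAut ^ 2) x = x
  rw [sq]
  simp [MulAut.mul_apply, negAut]

/-- The homomorphism `C₂ → Aut(ℤ)` sending the generator to `n ↦ -n`. -/
def negHom : Multiplicative (ZMod 2) →* MulAut (Multiplicative ℤ) :=
  MonoidHom.mk' (fun i => negAut ^ (toAdd i).val)
    (fun a b => by
      show negAut ^ (toAdd (a * b)).val = _
      rw [toAdd_mul, ZMod.val_add, ← pow_eq_pow_mod _ negAut_sq, pow_add])

/-- The infinite dihedral group `D∞ = C₂ ⋉ ℤ`, where the nontrivial element of `C₂`
acts on `ℤ` by `n ↦ -n`. -/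
abbrev DInf := SemidirectProduct (Multiplicative ℤ) (Multiplicative (ZMod 2)) negHom

open Filter Topology in
theorem abs_negHom (i : Multiplicative (ZMod 2)) (z : Multiplicative ℤ) :
    |toAdd (negHom i z)| = |toAdd z| := by
  have h : negHom i = negAut ^ (toAdd i).val := rfl
  rw [h]
  have h2 : (toAdd i).val < 2 := ZMod.val_lt _
  have : (toAdd i).val = 0 ∨ (toAdd i).val = 1 := by omega
  rcases this with h | h <;> rw [h]
  · simp
  · simp [negAut]

theorem std_length : IsLengthFunction
    (fun g : DInf => |((toAdd g.left : ℤ) : ℝ)| + if g.right = 1 then 0 else 1) := by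
  have key : ∀ i z, |((toAdd (negHom i z) : ℤ) : ℝ)| = |((toAdd z : ℤ) : ℝ)| := by
    intro i z
    exact_mod_cast abs_negHom i z
  refine ⟨?_, ?_, ?_, ?_⟩
  · intro x
    positivity
  · intro x
    constructor
    · intro h
      have h0 := abs_nonneg ((toAdd x.left : ℤ) : ℝ)
      dsimp only at h
      split_ifs at h with hx
      · have h1 : x.left = 1 := by simpa using h
        exact SemidirectProduct.ext h1 hx
      · linarith
    · rintro rfl
      simp
  · intro x
    simp only [SemidirectProduct.inv_left, SemidirectProduct.inv_right, key, inv_eq_one]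
    simp
  · intro x y
    simp only [SemidirectProduct.mul_left, SemidirectProduct.mul_right, toAdd_mul, Int.cast_add]
    have h1 := abs_add_le ((toAdd x.left : ℤ) : ℝ) (toAdd (negHom x.right y.left) : ℤ)
    rw [key] at h1
    have h2 : (if x.right * y.right = 1 then (0:ℝ) else 1) ≤
        (if x.right = 1 then 0 else 1) + (if y.right = 1 then 0 else 1) := by
      by_cases hx : x.right = 1 <;> by_cases hy : y.right = 1 <;> simp [hx, hy]
      split_ifs <;> norm_num
    linarith

theorem natAbs_tendsto :
    Filter.Tendsto (fun g : DInf => (toAdd g.left).natAbs) Filter.cofinite Filter.atTop := by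
  rw [← Nat.cofinite_eq_atTop]
  refine Filter.Tendsto.cofinite_of_finite_preimage_singleton ?_
  intro n
  have : ((fun g : DInf => (toAdd g.left).natAbs) ⁻¹' {n}) ⊆
      (fun p : ℤ × ZMod 2 => (⟨ofAdd p.1, ofAdd p.2⟩ : DInf)) ''
        (Set.Icc (-(n:ℤ)) n ×ˢ Set.univ) := by
    intro g hg
    refine ⟨(toAdd g.left, toAdd g.right), ⟨?_, trivial⟩, rfl⟩
    simp only [Set.mem_preimage, Set.mem_singleton_iff] at hg
    simp only [Set.mem_Icc]
    omega
  exact (((Set.finite_Icc _ _).prod Set.finite_univ).image _).subset this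

open Filter Topology in
theorem exists_lim (ℓ : DInf → ℝ) (h : IsMaximalLengthDiscrete ℓ) :
    ∃ L : ℝ, 0 < L ∧ Tendsto (fun g : DInf => ℓ g / ((toAdd g.left).natAbs : ℝ))
      cofinite (𝓝 L) := by
  obtain ⟨⟨hnn, h0, hinv, hmul⟩, hmax⟩ := h
  obtain ⟨K, C, hKC⟩ := hmax _ std_length
  set u : ℕ → ℝ := fun n => ℓ (SemidirectProduct.inl (ofAdd (n : ℤ))) with hu
  have hsub : Subadditive u := by
    intro m n
    simp only [hu, Nat.cast_add, ofAdd_add, map_mul]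
    exact hmul _ _
  have hlim : Tendsto (fun n => u n / n) atTop (𝓝 hsub.lim) := by
    apply hsub.tendsto_lim
    refine ⟨0, ?_⟩
    rintro _ ⟨n, rfl⟩
    exact div_nonneg (hnn _) (Nat.cast_nonneg _)
  have hnonneg : 0 ≤ hsub.lim :=
    ge_of_tendsto' hlim fun n => div_nonneg (hnn _) (Nat.cast_nonneg _)
  have hone : 1 ≤ K * hsub.lim + 0 := by
    refine ge_of_tendsto ((hlim.const_mul K).add (tendsto_const_div_atTop_nhds_zero_nat C)) ?_
    filter_upwards [eventually_gt_atTop 0] with n hn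
    have hn' : (0:ℝ) < n := by exact_mod_cast hn
    have h1 := hKC (SemidirectProduct.inl (ofAdd (n : ℤ)))
    simp at h1
    rw [← mul_div_assoc, ← add_div, le_div_iff₀ hn']
    simpa using h1
  have hpos : 0 < hsub.lim := by
    rcases hnonneg.eq_or_lt with h | h
    · rw [← h] at hone
      norm_num at hone
    · exact h
  refine ⟨hsub.lim, hpos, ?_⟩
  obtain ⟨M, hM⟩ : ∃ M, ∀ s : Multiplicative (ZMod 2),
      ℓ (SemidirectProduct.inr s : DInf) ≤ M := by
    haveI : Finite (Multiplicative (ZMod 2)) := inferInstanceAs (Finite (ZMod 2))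
    obtain ⟨M, hM⟩ := (Set.finite_range
      (fun s : Multiplicative (ZMod 2) => ℓ (SemidirectProduct.inr s : DInf))).bddAbove
    exact ⟨M, fun s => hM ⟨s, rfl⟩⟩
  have hl : ∀ z : Multiplicative ℤ,
      ℓ (SemidirectProduct.inl z : DInf) = u (toAdd z).natAbs := by
    intro z
    rcases Int.natAbs_eq (toAdd z) with h | h
    · simp only [hu]
      rw [← h, ofAdd_toAdd]
    · have hz : z = (ofAdd (((toAdd z).natAbs : ℕ) : ℤ))⁻¹ := by
        rw [← ofAdd_neg, ← h, ofAdd_toAdd]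
      simp only [hu]
      conv_lhs => rw [hz]
      rw [map_inv, hinv]
  have hdiff : ∀ g : DInf, |ℓ g - u (toAdd g.left).natAbs| ≤ M := by
    intro g
    have hg : g = SemidirectProduct.inl g.left * SemidirectProduct.inr g.right :=
      (SemidirectProduct.inl_left_mul_inr_right g).symm
    have e1 := hmul (SemidirectProduct.inl g.left) (SemidirectProduct.inr g.right)
    rw [← hg, hl] at e1
    have e2 := hmul g (SemidirectProduct.inr g.right)⁻¹
    have hg2 : g * (SemidirectProduct.inr g.right)⁻¹ = SemidirectProduct.inl g.left :=
      mul_inv_eq_of_eq_mul hg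
    rw [hg2, hl, hinv] at e2
    have := hM g.right
    rw [abs_le]
    constructor <;> linarith
  have t1 := hlim.comp natAbs_tendsto
  have t2 : Tendsto (fun g : DInf => (ℓ g - u (toAdd g.left).natAbs) /
      ((toAdd g.left).natAbs : ℝ)) cofinite (𝓝 0) := by
    refine squeeze_zero_norm (a := fun g : DInf => M / ((toAdd g.left).natAbs : ℝ)) ?_
      ((tendsto_const_div_atTop_nhds_zero_nat M).comp natAbs_tendsto)
    intro g
    rw [Real.norm_eq_abs, abs_div, Nat.abs_cast]
    exact div_le_div_of_nonneg_right (hdiff g) (Nat.cast_nonneg _)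
  have t3 := t1.add t2
  rw [add_zero] at t3
  refine t3.congr fun g => ?_
  simp only [Function.comp]
  ring

/-- The infinite dihedral group is asymptotically spherical: for any two maximal length
functions `ℓ₁, ℓ₂` on `D∞` there is `λ > 0` such that for every `ε > 0` the set
`{g | |ℓ₁(g)/ℓ₂(g) - λ| ≥ ε}` is finite. -/
theorem statement7 (ℓ₁ ℓ₂ : DInf → ℝ)
    (h₁ : IsMaximalLengthDiscrete ℓ₁) (h₂ : IsMaximalLengthDiscrete ℓ₂) :
    ∃ lam : ℝ, 0 < lam ∧ ∀ ε : ℝ, 0 < ε →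
      {g : DInf | ε ≤ |ℓ₁ g / ℓ₂ g - lam|}.Finite := by
  obtain ⟨L₁, hL₁, t₁⟩ := exists_lim ℓ₁ h₁
  obtain ⟨L₂, hL₂, t₂⟩ := exists_lim ℓ₂ h₂
  refine ⟨L₁ / L₂, div_pos hL₁ hL₂, fun ε hε => ?_⟩
  have t := t₁.div t₂ hL₂.ne'
  have h1 := (Metric.tendsto_nhds.mp t ε hε).and
    (natAbs_tendsto.eventually (Filter.eventually_gt_atTop 0))
  rw [Filter.eventually_cofinite] at h1
  refine h1.subset ?_
  rintro g hg ⟨h2, h3⟩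
  have h3' : ((toAdd g.left).natAbs : ℝ) ≠ 0 := by
    exact_mod_cast h3.ne'
  simp only [Pi.div_apply, Real.dist_eq] at h2
  rw [div_div_div_cancel_right₀ h3'] at h2
  exact absurd h2 (not_lt.mpr hg)
end

section
/- For each integer n ≥ 1 define ℓ_n(x, y) = n·|x| + |y| on the discrete group ℤ². Then each ℓ_n is a maximal length function on ℤ², and along the cofinite filter on ℤ² one has limsup ℓ_n/ℓ_1 = n and limsup ℓ_1/ℓ_n = 1, so that α(ℓ_n, ℓ_1) = log n. In particular, ℤ² has unbounded eccentricity: sup{ α(ℓ, ℓ') : ℓ, ℓ' maximal length functions on ℤ² } = ∞. -/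
open Filter Topology

/-- `ℓ_n(x, y) = n·|x| + |y|` on `ℤ²`. -/
noncomputable def ellN (n : ℕ) (p : ℤ × ℤ) : ℝ := (n : ℝ) * |(p.1 : ℝ)| + |(p.2 : ℝ)|

theorem limsup_aux (f : ℤ × ℤ → ℝ) (c : ℝ) (h0 : ∀ p, 0 ≤ f p) (hc : ∀ p, f p ≤ c)
    (g : ℕ → ℤ × ℤ) (hg : Function.Injective g) (hfg : ∀ k, f (g k) = c) :
    limsup f cofinite = c := by
  have hb : IsBoundedUnder (· ≤ ·) cofinite f := isBoundedUnder_of ⟨c, hc⟩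
  have hb' : IsBoundedUnder (· ≥ ·) cofinite f := isBoundedUnder_of ⟨0, h0⟩
  apply le_antisymm
  · exact limsup_le_of_le hb'.isCoboundedUnder_le (Eventually.of_forall hc)
  · refine le_limsup_of_frequently_le ?_ hb
    rw [frequently_cofinite_iff_infinite]
    exact Set.infinite_of_injective_forall_mem hg (fun k => (hfg k).ge)

theorem length_nsmul {G : Type*} [AddGroup G] {l : G → ℝ} (h : IsAddLengthFunction l)
    (a : G) (k : ℕ) : l (k • a) ≤ k * l a := by
  induction k with
  | zero => simp [(h.2.1 0).2 rfl]
  | succ k ih =>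
    rw [succ_nsmul]
    have := h.2.2.2 (k • a) a
    push_cast
    linarith

theorem length_zsmul {G : Type*} [AddGroup G] {l : G → ℝ} (h : IsAddLengthFunction l)
    (a : G) (k : ℤ) : l (k • a) ≤ |(k : ℝ)| * l a := by
  obtain ⟨m, rfl | rfl⟩ := k.eq_nat_or_neg
  · simpa using length_nsmul h a m
  · rw [neg_zsmul, h.2.2.1]
    simpa using length_nsmul h a m

theorem ellN_length (n : ℕ) (hn : 1 ≤ n) : IsAddLengthFunction (ellN n) := by
  have hn' : (1 : ℝ) ≤ n := by exact_mod_cast hn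
  refine ⟨fun x => by unfold ellN; positivity, ?_, fun x => by simp [ellN], ?_⟩
  · rintro ⟨x, y⟩
    constructor
    · intro h
      simp only [ellN] at h
      have hx := abs_nonneg (x : ℝ)
      have hy := abs_nonneg (y : ℝ)
      have h1 : |(x : ℝ)| = 0 := by nlinarith
      have h2 : |(y : ℝ)| = 0 := by nlinarith
      simpa using And.intro h1 h2
    · intro h
      rw [h]
      simp [ellN]
  · rintro ⟨x, y⟩ ⟨z, w⟩
    simp only [ellN, Prod.mk_add_mk, Int.cast_add]
    have h1 := abs_add_le (x : ℝ) z
    have h2 := abs_add_le (y : ℝ) w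
    nlinarith

theorem ellN_maximal (n : ℕ) (hn : 1 ≤ n) : IsMaximalAddLengthDiscrete (ellN n) := by
  have hn' : (1 : ℝ) ≤ n := by exact_mod_cast hn
  refine ⟨ellN_length n hn, fun l h => ⟨l (1, 0) + l (0, 1), 0, ?_⟩⟩
  rintro ⟨x, y⟩
  have e : ((x, y) : ℤ × ℤ) = x • ((1, 0) : ℤ × ℤ) + y • ((0, 1) : ℤ × ℤ) := by simp
  have h1 := length_zsmul h (1, 0) x
  have h2 := length_zsmul h (0, 1) y
  have h3 := h.2.2.2 (x • ((1, 0) : ℤ × ℤ)) (y • ((0, 1) : ℤ × ℤ))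
  rw [← e] at h3
  have ha := h.1 (1, 0)
  have hb := h.1 (0, 1)
  have hx := abs_nonneg (x : ℝ)
  have hy := abs_nonneg (y : ℝ)
  have h4 : |(x : ℝ)| ≤ n * |(x : ℝ)| := by nlinarith
  simp only [ellN]
  have h5 := mul_le_mul_of_nonneg_right h4 ha
  have h6 : 0 ≤ n * |(x : ℝ)| * l (0, 1) := by positivity
  have h7 := mul_nonneg hy ha
  linarith

theorem limsup_one (n : ℕ) (hn : 1 ≤ n) :
    limsup (fun p : ℤ × ℤ => ellN n p / ellN 1 p) cofinite = (n : ℝ) := by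
  have hn' : (1 : ℝ) ≤ n := by exact_mod_cast hn
  apply limsup_aux _ _ _ _ (fun k => ((k : ℤ) + 1, 0))
  · intro a b hab
    simpa using hab
  · intro k
    have : |(k : ℝ) + 1| ≠ 0 := by positivity
    simp [ellN, this]
  · intro p
    exact div_nonneg ((ellN_length n hn).1 p) ((ellN_length 1 le_rfl).1 p)
  · intro p
    apply div_le_of_le_mul₀ ((ellN_length 1 le_rfl).1 p) (by positivity)
    have hy := abs_nonneg (p.2 : ℝ)
    simp only [ellN, Nat.cast_one]
    nlinarith

theorem limsup_two (n : ℕ) (hn : 1 ≤ n) :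
    limsup (fun p : ℤ × ℤ => ellN 1 p / ellN n p) cofinite = 1 := by
  have hn' : (1 : ℝ) ≤ n := by exact_mod_cast hn
  apply limsup_aux _ _ _ _ (fun k => (0, (k : ℤ) + 1))
  · intro a b hab
    simpa using hab
  · intro k
    have : |(k : ℝ) + 1| ≠ 0 := by positivity
    simp [ellN, this]
  · intro p
    exact div_nonneg ((ellN_length 1 le_rfl).1 p) ((ellN_length n hn).1 p)
  · intro p
    apply div_le_of_le_mul₀ ((ellN_length n hn).1 p) (by positivity)
    have hx := abs_nonneg (p.1 : ℝ)
    simp only [ellN, Nat.cast_one]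
    nlinarith

/-- Each `ℓ_n`, `n ≥ 1`, is a maximal length function on the discrete group `ℤ²`, with
`limsup ℓ_n/ℓ_1 = n` and `limsup ℓ_1/ℓ_n = 1` along the cofinite filter, so that
`α(ℓ_n, ℓ_1) = log n`.  In particular `ℤ²` has unbounded eccentricity: the values
`α(ℓ, ℓ')` over pairs of maximal length functions are unbounded. -/
theorem statement17 :
    (∀ n : ℕ, 1 ≤ n →
      IsMaximalAddLengthDiscrete (ellN n) ∧
      limsup (fun p : ℤ × ℤ => ellN n p / ellN 1 p) cofinite = (n : ℝ) ∧
      limsup (fun p : ℤ × ℤ => ellN 1 p / ellN n p) cofinite = 1 ∧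
      Real.log (limsup (fun p : ℤ × ℤ => ellN n p / ellN 1 p) cofinite) +
        Real.log (limsup (fun p : ℤ × ℤ => ellN 1 p / ellN n p) cofinite)
        = Real.log (n : ℝ)) ∧
    ∀ C : ℝ, ∃ ℓ ℓ' : ℤ × ℤ → ℝ,
      IsMaximalAddLengthDiscrete ℓ ∧ IsMaximalAddLengthDiscrete ℓ' ∧
      C < Real.log (limsup (fun p : ℤ × ℤ => ℓ p / ℓ' p) cofinite) +
        Real.log (limsup (fun p : ℤ × ℤ => ℓ' p / ℓ p) cofinite) := by
  refine ⟨fun n hn => ⟨ellN_maximal n hn, limsup_one n hn, limsup_two n hn, ?_⟩, fun C => ?_⟩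
  · rw [limsup_one n hn, limsup_two n hn]
    simp
  · obtain ⟨n, h⟩ := exists_nat_gt (Real.exp C)
    have hpos : (0 : ℝ) < n := (Real.exp_pos C).trans h
    have hn : 1 ≤ n := by exact_mod_cast hpos
    refine ⟨ellN n, ellN 1, ellN_maximal n hn, ellN_maximal 1 le_rfl, ?_⟩
    rw [limsup_one n hn, limsup_two n hn, Real.log_one, add_zero]
    exact (Real.lt_log_iff_exp_lt hpos).2 h
end

section
/- Let X be a real Banach space which is almost transitive: for all a, b ∈ X with ‖a‖ = ‖b‖ = 1 and every δ > 0 there is a surjective linear isometry T : X → X with ‖T(a) − b‖ < δ. Then for all x, y, z, u ∈ X with ‖y − x‖ ≤ ‖u − z‖ and every ε > 0, there exist a surjective linear isometry T : X → X and a vector c ∈ X such that the affine isometry h(v) = T(v) + c satisfies h(z) = x and ‖h(u) − y‖ < (‖u − z‖ − ‖y − x‖) + ε. -/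
/-- Let `X` be an almost transitive real Banach space: for all unit vectors `a, b` and
every `δ > 0` there is a surjective linear isometry `T` of `X` with `‖T a - b‖ < δ`.
Then for all `x, y, z, u ∈ X` with `‖y - x‖ ≤ ‖u - z‖` and every `ε > 0` there are a
surjective linear isometry `T` of `X` and a vector `c ∈ X` such that the affine isometry
`h(v) = T v + c` satisfies `h(z) = x` and `‖h(u) - y‖ < (‖u - z‖ - ‖y - x‖) + ε`. -/
theorem statement18 {X : Type*} [NormedAddCommGroup X] [NormedSpace ℝ X] [CompleteSpace X]
    (htrans : ∀ a b : X, ‖a‖ = 1 → ‖b‖ = 1 → ∀ δ : ℝ, 0 < δ →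
      ∃ T : X ≃ₗᵢ[ℝ] X, ‖T a - b‖ < δ) :
    ∀ x y z u : X, ‖y - x‖ ≤ ‖u - z‖ → ∀ ε : ℝ, 0 < ε →
      ∃ (T : X ≃ₗᵢ[ℝ] X) (c : X),
        T z + c = x ∧ ‖(T u + c) - y‖ < (‖u - z‖ - ‖y - x‖) + ε := by
  intro x y z u hle ε hε
  suffices H : ∃ T : X ≃ₗᵢ[ℝ] X, ‖T (u - z) - (y - x)‖ < (‖u - z‖ - ‖y - x‖) + ε by
    obtain ⟨T, hT⟩ := H
    refine ⟨T, x - T z, by abel, ?_⟩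
    have h : T u + (x - T z) - y = T (u - z) - (y - x) := by
      rw [map_sub]; abel
    rw [h]; exact hT
  generalize u - z = p at *
  generalize y - x = q at *
  by_cases hq : q = 0
  · refine ⟨LinearIsometryEquiv.refl ℝ X, ?_⟩
    simp [hq, hε]
  have hq0 : 0 < ‖q‖ := norm_pos_iff.mpr hq
  have hp0 : 0 < ‖p‖ := lt_of_lt_of_le hq0 hle
  have ha : ‖(‖p‖⁻¹ • p)‖ = 1 := by
    rw [norm_smul, norm_inv, norm_norm, inv_mul_cancel₀ hp0.ne']
  have hb : ‖(‖q‖⁻¹ • q)‖ = 1 := by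
    rw [norm_smul, norm_inv, norm_norm, inv_mul_cancel₀ hq0.ne']
  obtain ⟨T, hT⟩ := htrans _ _ ha hb (ε / ‖q‖) (div_pos hε hq0)
  refine ⟨T, ?_⟩
  have hp' : ‖p‖ • (‖p‖⁻¹ • p) = p := smul_inv_smul₀ hp0.ne' p
  have hq' : ‖q‖ • (‖q‖⁻¹ • q) = q := smul_inv_smul₀ hq0.ne' q
  generalize ‖p‖⁻¹ • p = a at *
  generalize ‖q‖⁻¹ • q = b at *
  have key : T p - q = (‖p‖ - ‖q‖) • T a + ‖q‖ • (T a - b) := by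
    have h1 : T p = ‖p‖ • T a := by rw [← map_smul, hp']
    rw [h1, sub_smul, smul_sub, hq']; abel
  rw [key]
  have h1 : ‖(‖p‖ - ‖q‖) • T a‖ = ‖p‖ - ‖q‖ := by
    rw [norm_smul, T.norm_map, ha, mul_one, Real.norm_of_nonneg (sub_nonneg.mpr hle)]
  have h2 : ‖‖q‖ • (T a - b)‖ < ε := by
    rw [norm_smul, norm_norm, mul_comm]
    exact (lt_div_iff₀ hq0).mp hT
  have h3 := norm_add_le ((‖p‖ - ‖q‖) • T a) (‖q‖ • (T a - b))
  linarith
end
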